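/- Let (A, τ, S, (A_I), (E_I)) be an A_0-valued white noise and let (u_t)_{t≥0} be a unitary cocycle for the shift S. Define R_t : A_0 → A by R_t(x) = E_0(u_t* S_t(x) u_t) for t ≥ 0 and x ∈ A_0. Then R_t(x) ∈ A_0, R_t(1) = 1, R_0 is the identity on A_0, and R_{s+t}(x) = R_s(R_t(x)) for all s, t ≥ 0 and all x ∈ A_0; that is, the compressions of the coupled dynamics Ad u_t ∘ S_t to A_0 form a one-parameter semigroup (the Markovian semigroup of the coupling). -/

import Mathlib

open scoped ComplexOrder

/-- A faithful tracial state on a unital C*-algebra. -/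
structure IsTracialState {A : Type*} [CStarAlgebra A] (τ : A →ₗ[ℂ] ℂ) : Prop where
  map_one : τ 1 = 1
  pos : ∀ x : A, 0 ≤ τ (star x * x)
  tracial : ∀ x y : A, τ (x * y) = τ (y * x)
  bounded : ∀ x : A, ‖τ x‖ ≤ ‖x‖
  faithful : ∀ x : A, τ (star x * x) = 0 → x = 0

/-- A (trace-preserving) conditional expectation onto a subset `B` of `A`. -/
structure IsCondExp {A : Type*} [CStarAlgebra A] (τ : A →ₗ[ℂ] ℂ) (B : Set A)
    (E : A →ₗ[ℂ] A) : Prop where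
  mem_range : ∀ x, E x ∈ B
  map_of_mem : ∀ b ∈ B, E b = b
  bimodule : ∀ a ∈ B, ∀ c ∈ B, ∀ x, E (a * x * c) = a * E x * c
  map_star : ∀ x, E (star x) = star (E x)
  contractive : ∀ x, ‖E x‖ ≤ ‖x‖
  trace_eq : ∀ x, τ (E x) = τ x

/-- An `A₀`-valued white noise `(A, τ, S, (A_I), (E_I))`.  The filtration is indexed by
closed intervals `[a, b]` of `ℝ` with (possibly infinite) endpoints `a b : EReal`. -/
structure WhiteNoise (A : Type*) [CStarAlgebra A] (τ : A →ₗ[ℂ] ℂ) where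
  tracial : IsTracialState τ
  /-- the filtration algebra `A_{[a,b]}` -/
  alg : EReal → EReal → StarSubalgebra ℂ A
  alg_isClosed : ∀ a b, IsClosed (alg a b : Set A)
  alg_mono : ∀ a b a' b' : EReal, a' ≤ a → b ≤ b' → (alg a b : Set A) ⊆ alg a' b'
  /-- the distinguished subalgebra `A₀` -/
  A0 : StarSubalgebra ℂ A
  A0_isClosed : IsClosed (A0 : Set A)
  A0_le : ∀ a b, (A0 : Set A) ⊆ alg a b
  /-- the conditional expectation `E_{[a,b]}` onto `A_{[a,b]}` -/
  E : EReal → EReal → (A →ₗ[ℂ] A)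
  /-- the conditional expectation `E₀` onto `A₀` -/
  E0 : A →ₗ[ℂ] A
  E_condExp : ∀ a b, IsCondExp τ (alg a b) (E a b)
  E0_condExp : IsCondExp τ A0 E0
  /-- the white noise shift: a one-parameter group of trace-preserving `*`-automorphisms -/
  S : ℝ → (A ≃⋆ₐ[ℂ] A)
  S_zero : ∀ x, S 0 x = x
  S_add : ∀ s t x, S (s + t) x = S s (S t x)
  S_trace : ∀ t x, τ (S t x) = τ x
  S_alg : ∀ (t : ℝ) (a b : EReal),
    (S t) '' (alg a b : Set A) = (alg (a + (t : EReal)) (b + (t : EReal)) : Set A)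
  S_fix : ∀ t, ∀ a ∈ A0, S t a = a
  E0_S : ∀ t x, E0 (S t x) = E0 x
  /-- independence over `A₀`: `E_I ∘ E_J = E₀` whenever the interiors of `I`, `J` are disjoint -/
  indep : ∀ a b c d : EReal,
    (∀ x : ℝ, ¬((a < (x : EReal) ∧ (x : EReal) < b) ∧ (c < (x : EReal) ∧ (x : EReal) < d))) →
    ∀ y, E a b (E c d y) = E0 y
  /-- the tower property `E₀ ∘ E_I = E₀` -/
  tower : ∀ (a b : EReal) (y : A), E0 (E a b y) = E0 y

/-!
The coupled dynamics `Θ_t(x) = u_t* S_t(x) u_t` is a one-parameter semigroup on all of `A`, because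
`u` is a cocycle. If `y` lies in the future algebra `A_{[0,∞)}`, then `S_s(y)` lies in `A_{[s,∞)}`,
so by independence `E_{[0,s]}(S_s(y)) = E₀(y)`; since `u_s ∈ A_{[0,s]}` can be pulled out of
`E_{[0,s]}`, this gives the Markov property `E_{[0,s]}(Θ_s(y)) = Θ_s(E₀(y))`. Applying `E₀` and
putting `y = Θ_t(x)` turns `Θ_{s+t} = Θ_s ∘ Θ_t` into the semigroup law of the `E₀ ∘ Θ_t`.
-/

namespace WhiteNoise

variable {A : Type*} [CStarAlgebra A] {τ : A →ₗ[ℂ] ℂ} (W : WhiteNoise A τ)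

theorem S_mem_alg (t : ℝ) {a b : EReal} {x : A} (hx : x ∈ W.alg a b) :
    W.S t x ∈ W.alg (a + t) (b + t) := by
  rw [← SetLike.mem_coe, ← W.S_alg]
  exact Set.mem_image_of_mem _ hx

theorem E_eq_E0_of_mem_alg {a b c d : EReal} (hbc : b ≤ c) {x : A} (hx : x ∈ W.alg c d) :
    W.E a b x = W.E0 x := by
  have hdisjoint (r : ℝ) : ¬((a < (r : EReal) ∧ (r : EReal) < b) ∧
      (c < (r : EReal) ∧ (r : EReal) < d)) :=
    fun ⟨⟨_, hrb⟩, hcr, _⟩ ↦ (hrb.trans_le hbc).not_gt hcr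
  calc W.E a b x = W.E a b (W.E c d x) := by rw [(W.E_condExp c d).map_of_mem x hx]
    _ = W.E0 x := W.indep a b c d hdisjoint x

theorem E_S_eq_E0 (s : ℝ) (a : EReal) {b : EReal} {y : A} (hy : y ∈ W.alg 0 b) :
    W.E a s (W.S s y) = W.E0 y := by
  rw [W.E_eq_E0_of_mem_alg (zero_add (s : EReal)).ge (W.S_mem_alg s hy), W.E0_S]

/-- A (not necessarily unitary) adapted cocycle for the shift of `W`. The values `u t` at negative
times are unconstrained. -/
structure IsAdaptedCocycle (u : ℝ → A) : Prop where
  mem_alg : ∀ t : ℝ, 0 ≤ t → u t ∈ W.alg 0 (t : EReal)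
  map_add : ∀ s t : ℝ, 0 ≤ s → 0 ≤ t → u (s + t) = W.S t (u s) * u t

/-- The dynamics `Θ_t(x) = u_t* S_t(x) u_t` obtained by coupling the shift of `W` to `u`. -/
noncomputable def coupledDynamics (u : ℝ → A) (t : ℝ) (x : A) : A :=
  star (u t) * W.S t x * u t

/-- The compression `R_t = E₀ ∘ Θ_t` of the coupled dynamics, defined on all of `A` rather than
only on `A₀`. -/
noncomputable def compression (u : ℝ → A) (t : ℝ) (x : A) : A :=
  W.E0 (W.coupledDynamics u t x)

theorem compression_mem_A0 (u : ℝ → A) (t : ℝ) (x : A) : W.compression u t x ∈ W.A0 :=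
  W.E0_condExp.mem_range _

variable {W} {u : ℝ → A}

theorem compression_one {t : ℝ} (hut : star (u t) * u t = 1) : W.compression u t 1 = 1 := by
  rw [compression, coupledDynamics, map_one, mul_one, hut]
  exact W.E0_condExp.map_of_mem 1 (one_mem W.A0)

namespace IsAdaptedCocycle

variable (hu : W.IsAdaptedCocycle u)
include hu

theorem apply_zero (hu₀ : star (u 0) * u 0 = 1) : u 0 = 1 := by
  have hidem : u 0 * u 0 = u 0 * 1 := by
    simpa only [add_zero, W.S_zero, mul_one] using (hu.map_add 0 0 le_rfl le_rfl).symm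
  exact isLeftRegular_of_mul_eq_one hu₀ hidem

theorem compression_zero (hu₀ : star (u 0) * u 0 = 1) (x : A) :
    W.compression u 0 x = W.E0 x := by
  rw [compression, coupledDynamics, hu.apply_zero hu₀, W.S_zero, star_one, one_mul, mul_one]

theorem coupledDynamics_add {s t : ℝ} (hs : 0 ≤ s) (ht : 0 ≤ t) (x : A) :
    W.coupledDynamics u (s + t) x = W.coupledDynamics u s (W.coupledDynamics u t x) := by
  have hcocycle : u (s + t) = W.S s (u t) * u s := add_comm t s ▸ hu.map_add t s ht hs
  simp only [coupledDynamics, hcocycle, W.S_add, star_mul, map_mul, map_star, mul_assoc]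

theorem coupledDynamics_mem_future {t : ℝ} (ht : 0 ≤ t) {x : A} (hx : x ∈ W.alg 0 ⊤) :
    W.coupledDynamics u t x ∈ W.alg 0 ⊤ := by
  have ht' : (0 : EReal) ≤ 0 + t := by simpa using ht
  have hut : u t ∈ W.alg 0 ⊤ := W.alg_mono _ _ _ _ le_rfl le_top (hu.mem_alg t ht)
  have hSx : W.S t x ∈ W.alg 0 ⊤ := W.alg_mono _ _ _ _ ht' le_top (W.S_mem_alg t hx)
  exact mul_mem (mul_mem (star_mem hut) hSx) hut

theorem E_coupledDynamics {s : ℝ} (hs : 0 ≤ s) {b : EReal} {y : A} (hy : y ∈ W.alg 0 b) :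
    W.E 0 s (W.coupledDynamics u s y) = W.coupledDynamics u s (W.E0 y) := by
  have hus := hu.mem_alg s hs
  calc W.E 0 s (star (u s) * W.S s y * u s)
      = star (u s) * W.E 0 s (W.S s y) * u s :=
        (W.E_condExp 0 s).bimodule _ (star_mem hus) _ hus _
    _ = star (u s) * W.E0 y * u s := by rw [W.E_S_eq_E0 s 0 hy]
    _ = star (u s) * W.S s (W.E0 y) * u s := by rw [W.S_fix s _ (W.E0_condExp.mem_range y)]

theorem compression_E0 {s : ℝ} (hs : 0 ≤ s) {b : EReal} {y : A} (hy : y ∈ W.alg 0 b) :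
    W.compression u s (W.E0 y) = W.compression u s y := by
  rw [compression, ← hu.E_coupledDynamics hs hy, W.tower, compression]

theorem compression_add {s t : ℝ} (hs : 0 ≤ s) (ht : 0 ≤ t) {x : A} (hx : x ∈ W.alg 0 ⊤) :
    W.compression u (s + t) x = W.compression u s (W.compression u t x) := by
  calc W.compression u (s + t) x
      = W.compression u s (W.coupledDynamics u t x) :=
        congrArg W.E0 (hu.coupledDynamics_add hs ht x)
    _ = W.compression u s (W.compression u t x) :=
        (hu.compression_E0 hs (hu.coupledDynamics_mem_future ht hx)).symm

end IsAdaptedCocycle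

end WhiteNoise

theorem markov_semigroup_of_coupling_general {A : Type*} [CStarAlgebra A]
    {τ : A →ₗ[ℂ] ℂ} (W : WhiteNoise A τ) {u : ℝ → A} (hu : W.IsAdaptedCocycle u)
    (hiso : ∀ t : ℝ, 0 ≤ t → star (u t) * u t = 1) :
    (∀ t x, W.compression u t x ∈ W.A0) ∧
    (∀ t : ℝ, 0 ≤ t → W.compression u t 1 = 1) ∧
    (∀ x, W.compression u 0 x = W.E0 x) ∧
    (∀ s t : ℝ, 0 ≤ s → 0 ≤ t → ∀ x ∈ W.alg 0 ⊤,
      W.compression u (s + t) x = W.compression u s (W.compression u t x)) :=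
  ⟨W.compression_mem_A0 u, fun t ht ↦ WhiteNoise.compression_one (hiso t ht),
    hu.compression_zero (hiso 0 le_rfl), fun _ _ hs ht _ ↦ hu.compression_add hs ht⟩

/-- The compressions `R_t(x) = E₀(u_t* S_t(x) u_t)` of the coupled dynamics `Ad u_t ∘ S_t`
to `A₀` form a one-parameter semigroup: the Markovian semigroup of the coupling. -/
theorem markov_semigroup_of_coupling {A : Type*} [CStarAlgebra A]
    (τ : A →ₗ[ℂ] ℂ) (W : WhiteNoise A τ) (u : ℝ → A)
    (hunit : ∀ t : ℝ, 0 ≤ t → star (u t) * u t = 1 ∧ u t * star (u t) = 1)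
    (hadapt : ∀ t : ℝ, 0 ≤ t → u t ∈ W.alg 0 (t : EReal))
    (hcoc : ∀ s t : ℝ, 0 ≤ s → 0 ≤ t → u (s + t) = W.S t (u s) * u t)
    (R : ℝ → A → A)
    (hR : ∀ (t : ℝ) (x : A), R t x = W.E0 (star (u t) * W.S t x * u t)) :
    (∀ t : ℝ, 0 ≤ t → ∀ x ∈ W.A0, R t x ∈ W.A0) ∧
    (∀ t : ℝ, 0 ≤ t → R t 1 = 1) ∧
    (∀ x ∈ W.A0, R 0 x = x) ∧
    (∀ s t : ℝ, 0 ≤ s → 0 ≤ t → ∀ x ∈ W.A0, R (s + t) x = R s (R t x)) := by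
  obtain rfl : R = W.compression u := funext₂ hR
  obtain ⟨hmem, hone, hzero, hadd⟩ :=
    markov_semigroup_of_coupling_general W ⟨hadapt, hcoc⟩ fun t ht ↦ (hunit t ht).1
  exact ⟨fun t _ x _ ↦ hmem t x, hone,
    fun x hx ↦ (hzero x).trans (W.E0_condExp.map_of_mem x hx),
    fun s t hs ht x hx ↦ hadd s t hs ht x (W.A0_le _ _ hx)⟩
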